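/- Let Φ be a finite family of differentiable self-maps of a compact interval I such that there are 0 < κ' ≤ κ < 1 with κ' ≤ |f'(x)| ≤ κ for all f ∈ Φ, x ∈ I, and such that each f' is γ-Hölder with constant C (γ ∈ (0,1), C > 0). Then there exists a constant C₀, depending only on κ', κ, C and γ, such that for every n ≥ 1, every map g that is a composition of n members of Φ, and all x, y ∈ I: |log|g'(x)| − log|g'(y)|| ≤ C₀·|x−y|^γ. -/

import Mathlib

/-!
The bound `D / (1 - κ ^ γ)` on the distortion of a composition solves `E * κ ^ γ + D = E`, where `D`
bounds the distortion of a single map. It is therefore reproduced when a composition `g` is extended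
by an innermost map `h`: `log |(g ∘ h)'| = log |g'| ∘ h + log |h'|`, and since `h` contracts
distances by `κ`, the first summand varies by at most `E * κ ^ γ * |x - y| ^ γ`.
-/

open Set

noncomputable section

/-- Composition of the maps of an IFS along a finite word:
`compList f [i₁, …, i_ℓ] = f i₁ ∘ ⋯ ∘ f i_ℓ`. -/
def compList {ι : Type*} (f : ι → ℝ → ℝ) : List ι → ℝ → ℝ
  | [] => id
  | i :: l => f i ∘ compList f l

section compList

variable {ι : Type*} (f : ι → ℝ → ℝ)

lemma compList_append (l₁ l₂ : List ι) :
    compList f (l₁ ++ l₂) = compList f l₁ ∘ compList f l₂ := by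
  induction l₁ with
  | nil => rfl
  | cons i l ih => rw [List.cons_append, compList, ih, compList, Function.comp_assoc]

lemma compList_concat (l : List ι) (i : ι) : compList f (l ++ [i]) = compList f l ∘ f i :=
  compList_append f l [i]

end compList

lemma abs_log_sub_log_le {c u v : ℝ} (hc : 0 < c) (hu : c ≤ u) (hv : c ≤ v) :
    |Real.log u - Real.log v| ≤ |u - v| / c := by
  have log_sub_log_le {s t : ℝ} (hs : c ≤ s) (ht : c ≤ t) :
      Real.log s - Real.log t ≤ |s - t| / c := by
    have hs₀ : 0 < s := hc.trans_le hs
    have ht₀ : 0 < t := hc.trans_le ht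
    calc Real.log s - Real.log t = Real.log (s / t) := (Real.log_div hs₀.ne' ht₀.ne').symm
      _ ≤ s / t - 1 := Real.log_le_sub_one_of_pos (div_pos hs₀ ht₀)
      _ = (s - t) / t := by rw [sub_div, div_self ht₀.ne']
      _ ≤ |s - t| / t := by gcongr; exact le_abs_self _
      _ ≤ |s - t| / c := by gcongr
  exact abs_sub_le_iff.mpr ⟨log_sub_log_le hu hv, abs_sub_comm u v ▸ log_sub_log_le hv hu⟩

lemma deriv_comp_of_deriv_ne_zero {𝕜 : Type*} [NontriviallyNormedField 𝕜] {g h : 𝕜 → 𝕜} {x : 𝕜}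
    (hg : deriv g (h x) ≠ 0) (hh : deriv h x ≠ 0) :
    deriv (g ∘ h) x = deriv g (h x) * deriv h x :=
  deriv_comp x (differentiableAt_of_deriv_ne_zero hg) (differentiableAt_of_deriv_ne_zero hh)

lemma log_abs_deriv_comp {g h : ℝ → ℝ} {x : ℝ} (hg : deriv g (h x) ≠ 0) (hh : deriv h x ≠ 0) :
    Real.log |deriv (g ∘ h) x| = Real.log |deriv g (h x)| + Real.log |deriv h x| := by
  rw [deriv_comp_of_deriv_ne_zero hg hh, abs_mul,
    Real.log_mul (abs_ne_zero.mpr hg) (abs_ne_zero.mpr hh)]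

/-- The bounded distortion property: `log |g'|` is `γ`-Hölder on `s` with constant `D`.

The derivative is required not to vanish, as `Real.log 0 = 0` would otherwise hide its zeros. Since
`deriv` is zero at points of non-differentiability, `g` is then differentiable at every point of
`s`. -/
structure HasDistortionBound (D γ : ℝ) (g : ℝ → ℝ) (s : Set ℝ) : Prop where
  deriv_ne_zero : ∀ x ∈ s, deriv g x ≠ 0
  abs_log_deriv_sub_le : ∀ x ∈ s, ∀ y ∈ s,
    abs (Real.log |deriv g x| - Real.log |deriv g y|) ≤ D * |x - y| ^ γ

namespace HasDistortionBound

variable {D E γ κ : ℝ} {g h : ℝ → ℝ} {s t : Set ℝ}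

protected lemma id (hD : 0 ≤ D) : HasDistortionBound D γ id s where
  deriv_ne_zero x _ := by simp
  abs_log_deriv_sub_le x _ y _ := by
    simp only [deriv_id, sub_self, abs_zero]
    positivity

lemma of_deriv {c C : ℝ} (hc : 0 < c) (hlb : ∀ x ∈ s, c ≤ |deriv g x|)
    (hhol : ∀ x ∈ s, ∀ y ∈ s, |deriv g x - deriv g y| ≤ C * |x - y| ^ γ) :
    HasDistortionBound (C / c) γ g s where
  deriv_ne_zero x hx := abs_pos.mp (hc.trans_le (hlb x hx))
  abs_log_deriv_sub_le x hx y hy :=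
    calc abs (Real.log |deriv g x| - Real.log |deriv g y|)
        ≤ abs (|deriv g x| - |deriv g y|) / c := abs_log_sub_log_le hc (hlb x hx) (hlb y hy)
      _ ≤ |deriv g x - deriv g y| / c :=
          div_le_div_of_nonneg_right (abs_abs_sub_abs_le _ _) hc.le
      _ ≤ C * |x - y| ^ γ / c := by gcongr; exact hhol x hx y hy
      _ = C / c * |x - y| ^ γ := by rw [div_mul_eq_mul_div]

protected lemma comp (hg : HasDistortionBound E γ g t) (hh : HasDistortionBound D γ h s)
    (hmaps : MapsTo h s t) (hE : 0 ≤ E) (hγ : 0 ≤ γ) (hκ : 0 ≤ κ)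
    (hlip : ∀ x ∈ s, ∀ y ∈ s, |h x - h y| ≤ κ * |x - y|) :
    HasDistortionBound (E * κ ^ γ + D) γ (g ∘ h) s where
  deriv_ne_zero x hx := by
    have hgx := hg.deriv_ne_zero (h x) (hmaps hx)
    have hhx := hh.deriv_ne_zero x hx
    exact deriv_comp_of_deriv_ne_zero hgx hhx ▸ mul_ne_zero hgx hhx
  abs_log_deriv_sub_le x hx y hy := by
    have chain_rule : ∀ z ∈ s,
        Real.log |deriv (g ∘ h) z| = Real.log |deriv g (h z)| + Real.log |deriv h z| :=
      fun z hz => log_abs_deriv_comp (hg.deriv_ne_zero _ (hmaps hz)) (hh.deriv_ne_zero z hz)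
    have outer : abs (Real.log |deriv g (h x)| - Real.log |deriv g (h y)|)
        ≤ E * κ ^ γ * |x - y| ^ γ :=
      calc abs (Real.log |deriv g (h x)| - Real.log |deriv g (h y)|)
          ≤ E * |h x - h y| ^ γ := hg.abs_log_deriv_sub_le _ (hmaps hx) _ (hmaps hy)
        _ ≤ E * (κ * |x - y|) ^ γ := by gcongr; exact hlip x hx y hy
        _ = E * κ ^ γ * |x - y| ^ γ := by rw [Real.mul_rpow hκ (abs_nonneg _), mul_assoc]
    rw [chain_rule x hx, chain_rule y hy, add_sub_add_comm, add_mul]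
    exact (abs_add_le _ _).trans (add_le_add outer (hh.abs_log_deriv_sub_le x hx y hy))

end HasDistortionBound

lemma hasDistortionBound_compList {ι : Type*} {f : ι → ℝ → ℝ} {s : Set ℝ} {D γ κ : ℝ}
    (hD : 0 ≤ D) (hγ : 0 ≤ γ) (hκ : 0 ≤ κ) (hκγ : κ ^ γ < 1)
    (hmaps : ∀ i, MapsTo (f i) s s) (hf : ∀ i, HasDistortionBound D γ (f i) s)
    (hlip : ∀ i, ∀ x ∈ s, ∀ y ∈ s, |f i x - f i y| ≤ κ * |x - y|) (w : List ι) :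
    HasDistortionBound (D / (1 - κ ^ γ)) γ (compList f w) s := by
  have hden : 0 < 1 - κ ^ γ := sub_pos.mpr hκγ
  have fixed_point : D / (1 - κ ^ γ) * κ ^ γ + D = D / (1 - κ ^ γ) := by field_simp; ring
  induction w using List.reverseRecOn with
  | nil => exact HasDistortionBound.id (by positivity)
  | append_singleton l i ih =>
    rw [compList_concat, ← fixed_point]
    exact ih.comp (hf i) (hmaps i) (by positivity) hγ hκ (hlip i)

theorem stmt11_general {ι : Type*} {f : ι → ℝ → ℝ} {s : Set ℝ} {κ' κ γ C : ℝ} (hs : Convex ℝ s)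
    (hκ'0 : 0 < κ') (hκ0 : 0 ≤ κ) (hκ1 : κ < 1) (hγ : 0 < γ) (hC : 0 ≤ C)
    (hmaps : ∀ i, MapsTo (f i) s s)
    (hderiv : ∀ i, ∀ x ∈ s, κ' ≤ |deriv (f i) x| ∧ |deriv (f i) x| ≤ κ)
    (hhol : ∀ i, ∀ x ∈ s, ∀ y ∈ s, |deriv (f i) x - deriv (f i) y| ≤ C * |x - y| ^ γ)
    (w : List ι) : ∀ x ∈ s, ∀ y ∈ s,
      abs (Real.log |deriv (compList f w) x| - Real.log |deriv (compList f w) y|)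
        ≤ C / κ' / (1 - κ ^ γ) * |x - y| ^ γ := by
  have distortion (i : ι) : HasDistortionBound (C / κ') γ (f i) s :=
    .of_deriv hκ'0 (fun x hx => (hderiv i x hx).1) (hhol i)
  have contraction (i : ι) : ∀ x ∈ s, ∀ y ∈ s, |f i x - f i y| ≤ κ * |x - y| :=
    fun x hx y hy => hs.norm_image_sub_le_of_norm_deriv_le
      (fun z hz => differentiableAt_of_deriv_ne_zero ((distortion i).deriv_ne_zero z hz))
      (fun z hz => (hderiv i z hz).2) hy hx
  exact (hasDistortionBound_compList (by positivity) hγ.le hκ0 (Real.rpow_lt_one hκ0 hκ1 hγ)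
    hmaps distortion contraction w).abs_log_deriv_sub_le

theorem stmt11 (κ' κ γ C : ℝ) (hκ'0 : 0 < κ') (hκ'κ : κ' ≤ κ) (hκ1 : κ < 1)
    (hγ0 : 0 < γ) (hγ1 : γ < 1) (hC : 0 < C) :
    ∃ C₀ : ℝ, 0 < C₀ ∧
      ∀ (ι : Type) [Fintype ι] (f : ι → ℝ → ℝ) (a b : ℝ), a < b →
        (∀ i, MapsTo (f i) (Icc a b) (Icc a b)) →
        (∀ i, Differentiable ℝ (f i)) →
        (∀ i, ∀ x ∈ Icc a b, κ' ≤ |deriv (f i) x| ∧ |deriv (f i) x| ≤ κ) →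
        (∀ i, ∀ x ∈ Icc a b, ∀ y ∈ Icc a b,
          |deriv (f i) x - deriv (f i) y| ≤ C * |x - y| ^ γ) →
        ∀ w : List ι, w ≠ [] → ∀ x ∈ Icc a b, ∀ y ∈ Icc a b,
          abs (Real.log |deriv (compList f w) x| - Real.log |deriv (compList f w) y|)
            ≤ C₀ * |x - y| ^ γ :=
  have hκ0 : 0 ≤ κ := hκ'0.le.trans hκ'κ
  ⟨C / κ' / (1 - κ ^ γ), div_pos (div_pos hC hκ'0) (sub_pos.mpr (Real.rpow_lt_one hκ0 hκ1 hγ0)),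
    fun _ _ _ a b _ hmaps _ hderiv hhol w _ =>
      stmt11_general (convex_Icc a b) hκ'0 hκ0 hκ1 hγ0 hC.le hmaps hderiv hhol w⟩
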